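/- arXiv:2204.13876 — 2 statements merged into one kernel-verified Lean document; each statement's English description precedes it below -/
import Mathlib

section
/- Let G be a simple graph on a finite vertex set V partitioned as V = V₁ ⊔ V₂ with |V₁| = n₁ ≥ 1 and |V₂| = n₂ ≥ 1, and suppose the unique edge of G joining V₁ to V₂ is a single bridge edge {v₁, v₂} with v₁ ∈ V₁ and v₂ ∈ V₂ (all other edges of G lie within V₁ or within V₂). Then β_G(x) = (1+x)^{n₂}·β_{G[V₁]}(x) + (1+x)^{n₁}·β_{G[V₂]}(x) − x·(1+x)^{n₁+n₂−2} as polynomials with integer coefficients. -/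
open Polynomial

/-- `islandF G S` is the quantity `f_G(S) = 2·c_G(S) + e_G(S) − |S|`, where `c_G(S)`
and `e_G(S)` are the numbers of connected components and edges of the induced
subgraph `G[S]`.  For a planar graph it equals the total number of faces of a
planar embedding of `G[S]`, summed over connected components. -/
noncomputable def islandF {V : Type*} [Fintype V] [DecidableEq V]
    (G : SimpleGraph V) (S : Finset V) : ℤ :=
  2 * Nat.card ((G.induce (S : Set V)).ConnectedComponent)
    + Nat.card ((G.induce (S : Set V)).edgeSet) - S.card

/-- The total island boundary polynomial `β_G(x) = Σ_{∅ ≠ S ⊆ V} f_G(S)·x^{|S|−1}`. -/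
noncomputable def islandPoly {V : Type*} [Fintype V] [DecidableEq V]
    (G : SimpleGraph V) : Polynomial ℤ :=
  ∑ S ∈ Finset.univ.powerset.filter (fun S : Finset V => S.Nonempty),
    Polynomial.C (islandF G S) * Polynomial.X ^ (S.card - 1)

open SimpleGraph in
theorem ib_lift_adj {α γ : Type*} (K : SimpleGraph α) (f : α → γ)
    (h : ∀ a b, K.Adj a b → f a = f b) {a b : α} (r : K.Reachable a b) : f a = f b := by
  obtain ⟨w⟩ := r
  induction w with
  | nil => rfl
  | cons hadj _ ih => exact (h _ _ hadj).trans ih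

open SimpleGraph in
theorem ib_card_cc_sum {α β : Type*} [Finite α] [Finite β]
    (A : SimpleGraph α) (B : SimpleGraph β) :
    Nat.card (A ⊕g B).ConnectedComponent
      = Nat.card A.ConnectedComponent + Nat.card B.ConnectedComponent := by
  rw [← Nat.card_sum]
  let ψ : α ⊕ β → A.ConnectedComponent ⊕ B.ConnectedComponent :=
    Sum.map A.connectedComponentMk B.connectedComponentMk
  have hψ : ∀ a b, (A ⊕g B).Adj a b → ψ a = ψ b := by
    rintro (a | a) (b | b) h
    · simp at h; simpa [ψ] using h.reachable
    · simp at h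
    · simp at h
    · simp at h; simpa [ψ] using h.reachable
  let F : (A ⊕g B).ConnectedComponent → A.ConnectedComponent ⊕ B.ConnectedComponent :=
    ConnectedComponent.lift ψ (fun v w p _ => ib_lift_adj _ ψ hψ p.reachable)
  apply Nat.card_congr (Equiv.ofBijective F ⟨?_, ?_⟩)
  · intro c d
    induction c using ConnectedComponent.ind with | _ c
    induction d using ConnectedComponent.ind with | _ d
    intro h
    change ψ c = ψ d at h
    apply ConnectedComponent.sound
    rcases c with c | c <;> rcases d with d | d
    · simp [ψ] at h; exact h.map (Embedding.sumInl (G := A) (H := B)).toHom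
    · simp [ψ] at h
    · simp [ψ] at h
    · simp [ψ] at h; exact h.map (Embedding.sumInr (G := A) (H := B)).toHom
  · rintro (c | c)
    · induction c using ConnectedComponent.ind with | _ c
      exact ⟨connectedComponentMk _ (.inl c), rfl⟩
    · induction c using ConnectedComponent.ind with | _ c
      exact ⟨connectedComponentMk _ (.inr c), rfl⟩

open SimpleGraph in
open Classical in
theorem ib_card_cc_sum_edge {α β : Type*} [Finite α] [Finite β]
    (A : SimpleGraph α) (B : SimpleGraph β) (x : α) (y : β) :
    Nat.card ((A ⊕g B) ⊔ edge (.inl x) (.inr y)).ConnectedComponent + 1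
      = Nat.card A.ConnectedComponent + Nat.card B.ConnectedComponent := by
  have hB : Nat.card B.ConnectedComponent
      = Nat.card {c : B.ConnectedComponent // c ≠ B.connectedComponentMk y} + 1 := by
    have : Nat.card (Option {c : B.ConnectedComponent // c ≠ B.connectedComponentMk y})
      = Nat.card B.ConnectedComponent := Nat.card_congr (Equiv.optionSubtypeNe _)
    rw [← this, Finite.card_option]
  rw [hB, ← add_assoc, ← Nat.card_sum]
  congr 1
  set K := (A ⊕g B) ⊔ edge (.inl x) (.inr y) with hK
  have hxy : K.Adj (.inl x) (.inr y) := by simp [hK, edge_adj]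
  have hl : ∀ {a b}, A.Reachable a b → K.Reachable (.inl a) (.inl b) := fun h =>
    (h.map (Embedding.sumInl (G := A) (H := B)).toHom).mono le_sup_left
  have hr : ∀ {a b}, B.Reachable a b → K.Reachable (.inr a) (.inr b) := fun h =>
    (h.map (Embedding.sumInr (G := A) (H := B)).toHom).mono le_sup_left
  let ψ : α ⊕ β → A.ConnectedComponent ⊕ {c : B.ConnectedComponent // c ≠ B.connectedComponentMk y} :=
    Sum.elim (fun a => .inl (A.connectedComponentMk a))
      (fun b => if h : B.connectedComponentMk b = B.connectedComponentMk y then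
        .inl (A.connectedComponentMk x) else .inr ⟨B.connectedComponentMk b, h⟩)
  have hψ : ∀ a b, K.Adj a b → ψ a = ψ b := by
    rintro (a | a) (b | b) h
    · simp [hK, edge_adj] at h; simpa [ψ] using h.reachable
    · simp [hK, edge_adj] at h
      obtain ⟨rfl, rfl⟩ := h
      simp [ψ]
    · simp [hK, edge_adj] at h
      obtain ⟨rfl, rfl⟩ := h
      simp [ψ]
    · simp [hK, edge_adj] at h
      have := ConnectedComponent.sound h.reachable
      simp only [ψ, Sum.elim_inr, this]
  let F : K.ConnectedComponent → _ :=
    ConnectedComponent.lift ψ (fun v w p _ => ib_lift_adj _ ψ hψ p.reachable)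
  apply Nat.card_congr (Equiv.ofBijective F ⟨?_, ?_⟩)
  · intro c d
    induction c using ConnectedComponent.ind with | _ c
    induction d using ConnectedComponent.ind with | _ d
    intro h
    change ψ c = ψ d at h
    apply ConnectedComponent.sound
    have key : ∀ c d, ψ (.inl c) = ψ (.inr d) → K.Reachable (.inl c) (.inr d) := by
      intro c d h
      by_cases hd : B.connectedComponentMk d = B.connectedComponentMk y
      · simp only [ψ, Sum.elim_inl, Sum.elim_inr, dif_pos hd, Sum.inl.injEq] at h
        exact ((hl (ConnectedComponent.exact h)).trans hxy.reachable).trans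
          (hr (ConnectedComponent.exact hd.symm))
      · simp [ψ] at h
        simp_all
    rcases c with c | c <;> rcases d with d | d
    · simp [ψ] at h; exact hl h
    · exact key _ _ h
    · exact (key _ _ h.symm).symm
    · apply hr
      by_cases hc : B.connectedComponentMk c = B.connectedComponentMk y <;>
      by_cases hd : B.connectedComponentMk d = B.connectedComponentMk y
      · exact ConnectedComponent.exact (hc.trans hd.symm)
      · simp only [ψ, Sum.elim_inr, dif_pos hc, dif_neg hd] at h; cases h
      · simp only [ψ, Sum.elim_inr, dif_pos hd, dif_neg hc] at h; cases h
      · simp only [ψ, Sum.elim_inr, dif_neg hd, dif_neg hc, Sum.inr.injEq, Subtype.mk.injEq] at h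
        exact ConnectedComponent.exact h
  · rintro (c | ⟨c, hc⟩)
    · induction c using ConnectedComponent.ind with | _ c
      exact ⟨connectedComponentMk _ (.inl c), rfl⟩
    · induction c using ConnectedComponent.ind with | _ c
      refine ⟨connectedComponentMk _ (.inr c), ?_⟩
      change ψ (.inr c) = _
      simp only [ψ, Sum.elim_inr, dif_neg hc]

open SimpleGraph in
theorem ib_card_edge_sum_edge {α β : Type*} [Finite α] [Finite β]
    (A : SimpleGraph α) (B : SimpleGraph β) (x : α) (y : β) :
    Nat.card ((A ⊕g B) ⊔ edge (.inl x) (.inr y)).edgeSet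
      = Nat.card A.edgeSet + Nat.card B.edgeSet + 1 := by
  rw [← Nat.card_sum, ← Nat.card_congr (edgeSetSumEquiv (G := A) (H := B)),
    edgeSet_sup, edgeSet_edge_of_ne (by simp), Nat.card_coe_set_eq, Nat.card_coe_set_eq,
    Set.union_singleton, Set.ncard_insert_of_notMem (by simp) (Set.toFinite _)]

theorem ib_f_map {V W : Type*} [Fintype V] [DecidableEq V] [Fintype W] [DecidableEq W]
    (G : SimpleGraph V) (H : SimpleGraph W) (f : H ↪g G) (S : Finset W) :
    islandF H S = islandF G (S.map f.toEmbedding) := by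
  have e : H.induce (S : Set W) ≃g G.induce ((S.map f.toEmbedding : Finset V) : Set V) :=
    { toEquiv := (Equiv.Set.image f _ f.injective).trans
        (Equiv.setCongr (by simp))
      map_rel_iff' := by
        intro a b
        change G.Adj (f a) (f b) ↔ H.Adj a b
        exact f.map_rel_iff }
  unfold islandF
  rw [Nat.card_congr e.connectedComponentEquiv, Nat.card_congr e.mapEdgeSet, Finset.card_map]

open SimpleGraph in
theorem ib_f_union {V : Type*} [Fintype V] [DecidableEq V]
    (G : SimpleGraph V) (V₁ V₂ : Finset V)
    (hdisj : Disjoint V₁ V₂)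
    (v₁ v₂ : V) 
    (hbridge : G.Adj v₁ v₂)
    (hunique : ∀ a b : V, G.Adj a b → a ∈ V₁ → b ∈ V₂ → a = v₁ ∧ b = v₂)
    (S T : Finset V) (hS : S ⊆ V₁) (hT : T ⊆ V₂) :
    islandF G (S ∪ T) = islandF G S + islandF G T
      - (if v₁ ∈ S then 1 else 0) * (if v₂ ∈ T then 1 else 0) := by
  have hST : Disjoint S T := Finset.disjoint_of_subset_left hS (Finset.disjoint_of_subset_right hT hdisj)
  let K : SimpleGraph ((S : Set V) ⊕ (T : Set V)) := G.comap (Sum.elim Subtype.val Subtype.val)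
  have e : K ≃g G.induce ((S ∪ T : Finset V) : Set V) :=
    { toEquiv := ((Equiv.setCongr (by simp)).trans
        (Equiv.Set.union (s := (S : Set V)) (t := (T : Set V)) (by exact_mod_cast hST))).symm
      map_rel_iff' := by
        rintro (a | a) (b | b) <;> exact Iff.rfl }
  unfold islandF
  rw [← Nat.card_congr e.connectedComponentEquiv, ← Nat.card_congr e.mapEdgeSet,
    Finset.card_union_of_disjoint hST]
  by_cases h : v₁ ∈ S ∧ v₂ ∈ T
  · obtain ⟨h1, h2⟩ := h
    have hK : K = (G.induce (S : Set V) ⊕g G.induce (T : Set V)) ⊔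
        edge (.inl ⟨v₁, h1⟩) (.inr ⟨v₂, h2⟩) := by
      ext a b
      rcases a with ⟨a, ha⟩ | ⟨a, ha⟩ <;> rcases b with ⟨b, hb⟩ | ⟨b, hb⟩
      · simp [K, edge_adj]
      · simp [K, edge_adj]
        constructor
        · intro h; exact hunique _ _ h (hS ha) (hT hb)
        · rintro ⟨rfl, rfl⟩; exact hbridge
      · simp [K, edge_adj]
        constructor
        · intro h; exact (hunique _ _ h.symm (hS hb) (hT ha)).symm
        · rintro ⟨rfl, rfl⟩; exact hbridge.symm
      · simp [K, edge_adj]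
    have c1 := ib_card_cc_sum_edge (G.induce (S : Set V)) (G.induce (T : Set V)) ⟨v₁, h1⟩ ⟨v₂, h2⟩
    have c2 := ib_card_edge_sum_edge (G.induce (S : Set V)) (G.induce (T : Set V)) ⟨v₁, h1⟩ ⟨v₂, h2⟩
    rw [← hK] at c1 c2
    rw [if_pos h1, if_pos h2]
    push_cast
    zify at c1 c2
    linarith
  · have hK : K = (G.induce (S : Set V) ⊕g G.induce (T : Set V)) := by
      ext a b
      rcases a with ⟨a, ha⟩ | ⟨a, ha⟩ <;> rcases b with ⟨b, hb⟩ | ⟨b, hb⟩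
      · simp [K]
      · simp [K]
        intro h'
        obtain ⟨rfl, rfl⟩ := hunique _ _ h' (hS ha) (hT hb)
        exact h ⟨ha, hb⟩
      · simp [K]
        intro h'
        obtain ⟨rfl, rfl⟩ := hunique _ _ h'.symm (hS hb) (hT ha)
        exact h ⟨hb, ha⟩
      · simp [K]
    have c1 := ib_card_cc_sum (G.induce (S : Set V)) (G.induce (T : Set V))
    have c2 := Nat.card_congr (edgeSetSumEquiv (G := G.induce (S : Set V)) (H := G.induce (T : Set V)))
    rw [Nat.card_sum] at c2
    rw [← hK] at c1 c2
    have h0 : (if v₁ ∈ S then (1 : ℤ) else 0) * (if v₂ ∈ T then 1 else 0) = 0 := by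
      by_cases h1 : v₁ ∈ S
      · have : v₂ ∉ T := fun h2 => h ⟨h1, h2⟩
        simp [this]
      · simp [h1]
    rw [h0]
    push_cast
    zify at c1 c2
    linarith

theorem ib_f_empty {V : Type*} [Fintype V] [DecidableEq V] (G : SimpleGraph V) :
    islandF G ∅ = 0 := by
  have h1 : IsEmpty (G.induce ((∅ : Finset V) : Set V)).ConnectedComponent := by
    constructor
    intro c
    induction c using SimpleGraph.ConnectedComponent.ind with | _ c
    simpa using c.2
  have h2 : IsEmpty (G.induce ((∅ : Finset V) : Set V)).edgeSet := by
    constructor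
    rintro ⟨e, he⟩
    induction e with | _ a b
    simpa using a.2
  simp [islandF]

theorem ib_X_mul {V : Type*} [Fintype V] [DecidableEq V] (G : SimpleGraph V) :
    X * islandPoly G = ∑ S ∈ (Finset.univ : Finset V).powerset,
      C (islandF G S) * X ^ S.card := by
  unfold islandPoly
  rw [Finset.sum_filter, Finset.mul_sum]
  apply Finset.sum_congr rfl
  intro S _
  split_ifs with h
  · obtain ⟨k, hk⟩ := Nat.exists_eq_succ_of_ne_zero h.card_ne_zero
    rw [hk]
    simp only [Nat.succ_eq_add_one, Nat.add_sub_cancel]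
    ring
  · rw [Finset.not_nonempty_iff_eq_empty] at h
    subst h
    simp [ib_f_empty]

theorem ib_X_mul_induce {V : Type*} [Fintype V] [DecidableEq V] (G : SimpleGraph V)
    (V₁ : Finset V) :
    X * islandPoly (G.induce (V₁ : Set V)) = ∑ S ∈ V₁.powerset,
      C (islandF G S) * X ^ S.card := by
  rw [ib_X_mul]
  apply Finset.sum_bij (fun S _ => S.map (SimpleGraph.Embedding.induce (G := G) (V₁ : Set V)).toEmbedding)
  · intro S _
    rw [Finset.mem_powerset]
    intro a ha
    obtain ⟨b, _, rfl⟩ := Finset.mem_map.1 ha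
    exact b.2
  · intro S _ T _ h
    exact Finset.map_injective _ h
  · intro S hS
    rw [Finset.mem_powerset] at hS
    refine ⟨S.subtype (· ∈ (V₁ : Set V)), Finset.mem_powerset.2 (Finset.subset_univ _), ?_⟩
    ext a
    simp only [Finset.mem_map]
    constructor
    · rintro ⟨b, hb, rfl⟩
      simpa using hb
    · intro ha
      exact ⟨⟨a, hS ha⟩, by simpa using ha, rfl⟩
  · intro S _
    rw [ib_f_map G _ (SimpleGraph.Embedding.induce (G := G) (V₁ : Set V)), Finset.card_map]

theorem ib_sum_split {V : Type*} [Fintype V] [DecidableEq V] (V₁ V₂ : Finset V)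
    (hdisj : Disjoint V₁ V₂) (hcover : V₁ ∪ V₂ = Finset.univ) (g : Finset V → ℤ[X]) :
    ∑ S ∈ (Finset.univ : Finset V).powerset, g S
      = ∑ S ∈ V₁.powerset, ∑ T ∈ V₂.powerset, g (S ∪ T) := by
  rw [← Finset.sum_product']
  symm
  apply Finset.sum_nbij' (fun p => p.1 ∪ p.2) (fun S => (S ∩ V₁, S ∩ V₂))
  · simp
  · simp
  · rintro ⟨S, T⟩ h
    simp only [Finset.mem_product, Finset.mem_powerset] at h
    have h1 := Finset.disjoint_left.1 hdisj
    ext a <;> simp <;> grind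
  · intro S _
    rw [← Finset.inter_union_distrib_left, hcover, Finset.inter_univ]
  · simp

theorem ib_binom {V : Type*} (U : Finset V) :
    ∑ S ∈ U.powerset, (X : ℤ[X]) ^ S.card = (1 + X) ^ U.card := by
  rw [add_comm, ← Finset.sum_pow_mul_eq_add_pow]
  simp

theorem ib_binom_mem {V : Type*} [DecidableEq V] (U : Finset V) (v : V) (hv : v ∈ U) :
    ∑ S ∈ U.powerset, C (if v ∈ S then (1 : ℤ) else 0) * (X : ℤ[X]) ^ S.card
      = X * (1 + X) ^ (U.card - 1) := by
  conv_lhs => rw [← Finset.insert_erase hv]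
  rw [Finset.sum_powerset_insert (Finset.notMem_erase v U), ← Finset.card_erase_of_mem hv,
    ← ib_binom, Finset.mul_sum]
  rw [Finset.sum_eq_zero, zero_add]
  · apply Finset.sum_congr rfl
    intro S hS
    have : v ∉ S := fun h => Finset.notMem_erase v U (Finset.mem_powerset.1 hS h)
    rw [Finset.card_insert_of_notMem this]
    simp [pow_succ']
  · intro S hS
    have : v ∉ S := fun h => Finset.notMem_erase v U (Finset.mem_powerset.1 hS h)
    simp [this]

theorem islandPoly_bridge {V : Type*} [Fintype V] [DecidableEq V]
    (G : SimpleGraph V) (V₁ V₂ : Finset V)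
    (hdisj : Disjoint V₁ V₂) (hcover : V₁ ∪ V₂ = Finset.univ)
    (h₁ : 1 ≤ V₁.card) (h₂ : 1 ≤ V₂.card)
    (v₁ v₂ : V) (hv₁ : v₁ ∈ V₁) (hv₂ : v₂ ∈ V₂)
    (hbridge : G.Adj v₁ v₂)
    (hunique : ∀ a b : V, G.Adj a b → a ∈ V₁ → b ∈ V₂ → a = v₁ ∧ b = v₂) :
    islandPoly G
      = (1 + Polynomial.X) ^ V₂.card * islandPoly (G.induce (V₁ : Set V))
        + (1 + Polynomial.X) ^ V₁.card * islandPoly (G.induce (V₂ : Set V))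
        - Polynomial.X * (1 + Polynomial.X) ^ (V₁.card + V₂.card - 2) := by
  apply mul_left_cancel₀ (X_ne_zero (R := ℤ))
  have hR : X * ((1 + X) ^ V₂.card * islandPoly (G.induce (V₁ : Set V))
        + (1 + X) ^ V₁.card * islandPoly (G.induce (V₂ : Set V))
        - X * (1 + X) ^ (V₁.card + V₂.card - 2))
      = (X * islandPoly (G.induce (V₁ : Set V))) * (1 + X) ^ V₂.card
        + (1 + X) ^ V₁.card * (X * islandPoly (G.induce (V₂ : Set V)))
        - (X * (1 + X) ^ (V₁.card - 1)) * (X * (1 + X) ^ (V₂.card - 1)) := by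
    have : V₁.card + V₂.card - 2 = (V₁.card - 1) + (V₂.card - 1) := by omega
    rw [this, pow_add]
    ring
  rw [hR, ib_X_mul_induce, ib_X_mul_induce, ← ib_binom_mem V₁ v₁ hv₁, ← ib_binom_mem V₂ v₂ hv₂,
    ← ib_binom, ← ib_binom, Finset.sum_mul_sum, Finset.sum_mul_sum, Finset.sum_mul_sum,
    ib_X_mul, ib_sum_split V₁ V₂ hdisj hcover, ← Finset.sum_add_distrib, ← Finset.sum_sub_distrib]
  apply Finset.sum_congr rfl
  intro S hS
  rw [← Finset.sum_add_distrib, ← Finset.sum_sub_distrib]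
  apply Finset.sum_congr rfl
  intro T hT
  rw [Finset.mem_powerset] at hS hT
  rw [ib_f_union G V₁ V₂ hdisj v₁ v₂ hbridge hunique S T hS hT,
    Finset.card_union_of_disjoint
      (Finset.disjoint_of_subset_left hS (Finset.disjoint_of_subset_right hT hdisj)),
    C_sub, C_add, C_mul, pow_add]
  ring
end

section
/- Let T be a tree (a connected acyclic simple graph) on a finite vertex set V with n = |V| ≥ 2, and let κ : V → C be a vertex coloring such that adjacent vertices receive different colors, using exactly c = |κ(V)| colors. Then β_{T,κ}(x) = (1+x)^{c−1} + (n−1)·(1+x)^{c−2} as polynomials with integer coefficients. -/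
open Polynomial

/-- The colored total island boundary polynomial
`β_{G,κ}(x) = Σ_{∅ ≠ T ⊆ κ(V)} f_G(κ⁻¹(T))·x^{|T|−1}`, the sum ranging over
nonempty subsets `T` of the set of colors used by `κ`. -/
noncomputable def coloredIslandPoly {V : Type*} [Fintype V] [DecidableEq V]
    {γ : Type*} [DecidableEq γ] (G : SimpleGraph V) (κ : V → γ) : Polynomial ℤ :=
  ∑ T ∈ (Finset.univ.image κ).powerset.filter (fun T : Finset γ => T.Nonempty),
    Polynomial.C (islandF G (Finset.univ.filter (fun v => κ v ∈ T)))
      * Polynomial.X ^ (T.card - 1)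

theorem two_edges_eq {W : Type*} [Fintype W] (G : SimpleGraph W) :
    2 * Nat.card G.edgeSet = ∑ v : W, Nat.card (G.neighborSet v) := by
  classical
  have h := G.sum_degrees_eq_twice_card_edges
  rw [Nat.card_eq_fintype_card, ← SimpleGraph.edgeFinset_card, ← h]
  refine Finset.sum_congr rfl fun v _ => ?_
  rw [Nat.card_eq_fintype_card, SimpleGraph.card_neighborSet_eq_degree]

theorem forest_card {W : Type*} [Fintype W] (G : SimpleGraph W) (hG : G.IsAcyclic) :
    Nat.card G.ConnectedComponent + Nat.card G.edgeSet = Fintype.card W := by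
  classical
  have key : ∀ c : G.ConnectedComponent,
      2 + ∑ v : {v // G.connectedComponentMk v = c}, Nat.card (G.neighborSet v.1)
        = 2 * Fintype.card {v // G.connectedComponentMk v = c} := by
    intro c
    have ht := hG.isTree_connectedComponent c
    have h1 := (SimpleGraph.isTree_iff_connected_and_card.1 ht).2
    have h2 := two_edges_eq (W := {v // G.connectedComponentMk v = c}) c.toSimpleGraph
    have h3 : ∀ v : {v // G.connectedComponentMk v = c},
        Nat.card (G.neighborSet v.1) =
          Nat.card (SimpleGraph.neighborSet (V := {v // G.connectedComponentMk v = c})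
            c.toSimpleGraph v) := by
      intro v
      refine Nat.card_congr ⟨fun w => ⟨⟨w.1, ?_⟩, ?_⟩, fun w => ⟨w.1.1, w.2⟩,
        fun w => rfl, fun w => rfl⟩
      · exact (SimpleGraph.ConnectedComponent.connectedComponentMk_eq_of_adj w.2.symm).trans v.2
      · exact w.2
    rw [Finset.sum_congr rfl fun v _ => h3 v, ← h2, ← Nat.card_eq_fintype_card]
    have e := congrArg (2 * ·) h1
    simp only [mul_add] at e
    rw [add_comm]
    exact e
  have hs := Finset.sum_congr (rfl : (Finset.univ : Finset G.ConnectedComponent) = _)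
    fun c _ => key c
  rw [Finset.sum_add_distrib, ← Finset.mul_sum, ← Fintype.card_sigma,
    Fintype.card_congr (Equiv.sigmaFiberEquiv G.connectedComponentMk),
    Fintype.sum_fiberwise (g := G.connectedComponentMk) (f := fun v => Nat.card (G.neighborSet v)),
    ← two_edges_eq] at hs
  simp at hs
  rw [Nat.card_eq_fintype_card (α := G.ConnectedComponent)]
  simp only [Nat.card_eq_fintype_card, Fintype.card_ofFinset] at *
  omega

theorem two_edges_induce {V : Type*} [Fintype V] [DecidableEq V]
    (G : SimpleGraph V) [DecidableRel G.Adj] (S : Finset V) :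
    2 * Nat.card (G.induce (S : Set V)).edgeSet
      = ∑ v : V, ∑ w : V, if G.Adj v w ∧ v ∈ S ∧ w ∈ S then 1 else 0 := by
  rw [two_edges_eq]
  have h : ∀ v : (S : Set V), Nat.card ((G.induce (S : Set V)).neighborSet v)
      = ∑ w : V, if G.Adj v w ∧ w ∈ S then 1 else 0 := by
    intro v
    rw [← Finset.card_filter, ← Fintype.card_subtype, ← Nat.card_eq_fintype_card]
    exact Nat.card_congr ⟨fun w => ⟨w.1.1, w.2, w.1.2⟩, fun w => ⟨⟨w.1, w.2.2⟩, w.2.1⟩,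
        fun w => rfl, fun w => rfl⟩
  rw [Finset.sum_congr rfl fun v _ => h v]
  rw [show (∑ v : (S : Set V), ∑ w : V, if G.Adj v w ∧ w ∈ S then 1 else 0)
    = ∑ v ∈ S, ∑ w : V, if G.Adj v w ∧ w ∈ S then 1 else 0 from
      Finset.sum_coe_sort S fun v => ∑ w : V, if G.Adj v w ∧ w ∈ S then 1 else 0]
  rw [← Finset.sum_filter_add_sum_filter_not Finset.univ (· ∈ S)]
  rw [Finset.sum_eq_zero (s := Finset.univ.filter (¬ · ∈ S)), add_zero]
  · simp only [Finset.filter_univ_mem]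
    refine Finset.sum_congr rfl fun v hv => Finset.sum_congr rfl fun w _ => ?_
    simp [hv]
  · intro v hv
    simp at hv
    simp [hv]

theorem two_islandF {V : Type*} [Fintype V] [DecidableEq V]
    (G : SimpleGraph V) [DecidableRel G.Adj] (hG : G.IsAcyclic) (S : Finset V) :
    2 * islandF G S = 2 * (∑ v : V, if v ∈ S then 1 else 0)
      - ∑ v : V, ∑ w : V, if G.Adj v w ∧ v ∈ S ∧ w ∈ S then 1 else 0 := by
  have h1 := forest_card _ (hG.induce (S : Set V))
  have h2 := two_edges_induce G S
  zify at h1 h2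
  rw [← h2]
  simp at h1 ⊢
  unfold islandF
  simp
  linarith

theorem sum_supersets {γ : Type*} [DecidableEq γ] (C A : Finset γ) (hA : A ⊆ C) :
    ∑ T ∈ C.powerset, (if A ⊆ T then (X : ℤ[X]) ^ T.card else 0)
      = X ^ A.card * (1 + X) ^ (C.card - A.card) := by
  have h := Finset.sum_pow_mul_eq_add_pow (X : ℤ[X]) 1 (C \ A)
  rw [Finset.card_sdiff_of_subset hA] at h
  rw [add_comm 1, ← h, Finset.mul_sum, ← Finset.sum_filter]
  symm
  refine Finset.sum_bij (fun T _ => A ∪ T) ?_ ?_ ?_ ?_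
  · intro T hT
    simp only [Finset.mem_powerset, Finset.mem_filter] at *
    grind
  · intro T hT T' hT' h
    simp only [Finset.mem_powerset] at *
    ext x
    have := congrArg (x ∈ ·) h
    grind
  · intro T hT
    simp only [Finset.mem_powerset, Finset.mem_filter] at *
    exact ⟨T \ A, by grind, by grind⟩
  · intro T hT
    simp only [Finset.mem_powerset] at hT
    rw [Finset.card_union_of_disjoint (Finset.disjoint_left.2 fun x hx hx' => by grind)]
    simp [pow_add]

theorem coloredIslandPoly_tree {V : Type*} [Fintype V] [DecidableEq V]
    {γ : Type*} [DecidableEq γ] (T : SimpleGraph V) (hT : T.IsTree)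
    (hn : 2 ≤ Fintype.card V)
    (κ : V → γ) (hproper : ∀ a b : V, T.Adj a b → κ a ≠ κ b) :
    coloredIslandPoly T κ
      = (1 + Polynomial.X) ^ ((Finset.univ.image κ).card - 1)
        + Polynomial.C ((Fintype.card V - 1 : ℕ) : ℤ)
            * (1 + Polynomial.X) ^ ((Finset.univ.image κ).card - 2) := by
  classical
  set K := Finset.univ.image κ with hK
  have hmem : ∀ v, κ v ∈ K := fun v => by simp [hK]
  have hc : 2 ≤ K.card := by
    obtain ⟨a, b, hab⟩ := Fintype.exists_pair_of_one_lt_card (α := V) (by omega)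
    have : Nontrivial V := ⟨a, b, hab⟩
    obtain ⟨w, hw⟩ := hT.connected.preconnected.exists_adj_of_nontrivial a
    exact Finset.one_lt_card.2 ⟨κ a, hmem a, κ w, hmem w, hproper a w hw⟩
  have hdeg : (∑ v : V, ∑ w : V, if T.Adj v w then (1 : ℤ[X]) else 0)
      = 2 * C ((Fintype.card V - 1 : ℕ) : ℤ) := by
    have h1 := two_edges_eq T
    have h2 := (SimpleGraph.isTree_iff_connected_and_card.1 hT).2
    rw [Nat.card_eq_fintype_card (α := V)] at h2
    have h3 : Nat.card T.edgeSet = Fintype.card V - 1 := by omega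
    rw [h3] at h1
    have h4 := congrArg (Nat.cast : ℕ → ℤ[X]) h1
    push_cast at h4
    rw [show (C ((Fintype.card V - 1 : ℕ) : ℤ) : ℤ[X]) = ((Fintype.card V - 1 : ℕ) : ℤ[X]) by simp,
      h4]
    refine Finset.sum_congr rfl fun v _ => ?_
    rw [Nat.card_eq_fintype_card, SimpleGraph.card_neighborSet_eq_degree,
      ← SimpleGraph.card_neighborFinset_eq_degree, SimpleGraph.neighborFinset_eq_filter]
    simp
  -- multiply by 2 X
  have hmain : 2 * (X * coloredIslandPoly T κ) =
      ∑ t ∈ K.powerset, C (2 * islandF T (Finset.univ.filter (fun v => κ v ∈ t))) * X ^ t.card := by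
    unfold coloredIslandPoly
    rw [Finset.sum_filter, Finset.mul_sum, Finset.mul_sum]
    refine Finset.sum_congr rfl fun t _ => ?_
    by_cases ht : t.Nonempty
    · rw [if_pos ht]
      have : t.card = t.card - 1 + 1 := by have := ht.card_pos; omega
      conv_rhs => rw [this, pow_succ]
      simp only [C_mul, C_ofNat]
      ring
    · rw [if_neg ht]
      rw [Finset.not_nonempty_iff_eq_empty] at ht
      rw [two_islandF T hT.isAcyclic]
      simp [ht]
  have h5 : ∀ t : Finset γ,
      C (2 * islandF T (Finset.univ.filter (fun v => κ v ∈ t))) * (X : ℤ[X]) ^ t.card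
      = 2 * (∑ v : V, if {κ v} ⊆ t then X ^ t.card else 0)
        - ∑ v : V, ∑ w : V, if T.Adj v w then
            (if {κ v, κ w} ⊆ t then X ^ t.card else 0) else 0 := by
    intro t
    rw [two_islandF T hT.isAcyclic, C_sub, sub_mul, C_mul, map_sum, map_sum, mul_assoc,
      Finset.sum_mul, Finset.sum_mul]
    congr 1
    · congr 1
      refine Finset.sum_congr rfl fun v _ => ?_
      by_cases h : κ v ∈ t <;> simp [h]
    · refine Finset.sum_congr rfl fun v _ => ?_
      rw [map_sum, Finset.sum_mul]
      refine Finset.sum_congr rfl fun w _ => ?_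
      by_cases h : T.Adj v w <;> by_cases h1 : κ v ∈ t <;> by_cases h2 : κ w ∈ t <;>
        simp [h, h1, h2, Finset.insert_subset_iff]
  rw [Finset.sum_congr rfl fun t _ => h5 t, Finset.sum_sub_distrib, ← Finset.mul_sum,
    Finset.sum_comm] at hmain
  rw [Finset.sum_congr rfl fun v _ => sum_supersets K {κ v} (by simp [hmem])] at hmain
  have h6 : ∑ t ∈ K.powerset, ∑ v : V, ∑ w : V, (if T.Adj v w then
            (if {κ v, κ w} ⊆ t then (X : ℤ[X]) ^ t.card else 0) else 0)
      = (2 * C ((Fintype.card V - 1 : ℕ) : ℤ)) * (X ^ 2 * (1 + X) ^ (K.card - 2)) := by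
    rw [← hdeg, Finset.sum_comm, Finset.sum_mul]
    refine Finset.sum_congr rfl fun v _ => ?_
    rw [Finset.sum_comm, Finset.sum_mul]
    refine Finset.sum_congr rfl fun w _ => ?_
    by_cases h : T.Adj v w
    · simp only [h, if_true]
      rw [sum_supersets K {κ v, κ w} (by simp [Finset.insert_subset_iff, hmem]),
        Finset.card_pair (hproper v w h), one_mul]
    · simp [h]
  rw [h6] at hmain
  simp only [Finset.card_singleton, Finset.sum_const, Finset.card_univ, nsmul_eq_mul] at hmain
  obtain ⟨m, hm⟩ : ∃ m, Fintype.card V = m + 1 := ⟨_, (Nat.sub_add_cancel (by omega)).symm⟩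
  obtain ⟨k, hk⟩ : ∃ k, K.card = k + 2 := ⟨_, (Nat.sub_add_cancel hc).symm⟩
  have h2X : (2 * X : ℤ[X]) ≠ 0 := mul_ne_zero two_ne_zero X_ne_zero
  apply mul_left_cancel₀ h2X
  rw [mul_assoc, hmain, hm, hk]
  simp only [Nat.add_sub_cancel, show k + 2 - 1 = k + 1 by omega]
  simp
  ring
end
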